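/- Let W ⊆ ℝ² be a simple polygon with free space F, and let C and C' be distinct connected components of F. Define the mutual interference set I(C, C') = {x ∈ C : D₂(x) ∩ C' ≠ ∅} ∪ {x ∈ C' : D₂(x) ∩ C ≠ ∅}. If S ⊆ F is a set whose distinct points are pairwise at distance at least 4, then S ∩ I(C, C') contains at most one point; in particular, under monochromatic separation 4 the mutual interference set contains at most one start position and at most one target position. -/

import Mathlib

open Metric Set

noncomputable section

/-- The Euclidean plane ℝ². -/
abbrev Plane : Type := EuclideanSpace ℝ (Fin 2)

/-- A simple polygon, given by a simple (injective) closed polygonal curve in the plane. -/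
structure SimplePolygon where
  /-- the parametrization of the boundary curve over `[0,1]` -/
  toFun : ℝ → Plane
  continuous : Continuous toFun
  closed : toFun 0 = toFun 1
  injOn : Set.InjOn toFun (Set.Ico (0 : ℝ) 1)
  /-- the curve is polygonal: it is affine on each piece of some finite partition of `[0,1]` -/
  polygonal : ∃ (n : ℕ) (t : Fin (n + 1) → ℝ),
    t 0 = 0 ∧ t (Fin.last n) = 1 ∧ StrictMono t ∧
    ∀ i : Fin n, ∀ s ∈ Set.Icc (t i.castSucc) (t i.succ),
      toFun s = toFun (t i.castSucc) +
        ((s - t i.castSucc) / (t i.succ - t i.castSucc)) •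
          (toFun (t i.succ) - toFun (t i.castSucc))

/-- The boundary curve of a simple polygon, as a subset of the plane. -/
def SimplePolygon.bdryCurve (P : SimplePolygon) : Set Plane :=
  P.toFun '' Set.Icc 0 1

/-- The closed region bounded by a simple polygon: the union of the boundary curve with
the bounded connected components of its complement. -/
def SimplePolygon.region (P : SimplePolygon) : Set Plane :=
  P.bdryCurve ∪
    {x | x ∉ P.bdryCurve ∧ Bornology.IsBounded (connectedComponentIn P.bdryCurveᶜ x)}

/-- The free space of a simple polygon: all positions whose open unit disc lies in the region. -/
def SimplePolygon.freeSpace (P : SimplePolygon) : Set Plane :=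
  {x | Metric.ball x 1 ⊆ P.region}

/-- `C` is a connected component of the set `F`. -/
def IsFreeComponent (F C : Set Plane) : Prop :=
  ∃ x ∈ F, C = connectedComponentIn F x

/-- The mutual interference set of two free-space components `C` and `C'`: all points of
either component whose aura meets the other component. -/
def mutualInterference (C C' : Set Plane) : Set Plane :=
  {x ∈ C | (Metric.ball x 2 ∩ C').Nonempty} ∪ {x ∈ C' | (Metric.ball x 2 ∩ C).Nonempty}

theorem isPreconnected_compl_closedBall_zero {E : Type*} [NormedAddCommGroup E] [NormedSpace ℝ E]
    (h : 1 < Module.rank ℝ E) {R : ℝ} (hR : 0 ≤ R) :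
    IsPreconnected (closedBall (0 : E) R)ᶜ := by
  have himage : (closedBall (0 : E) R)ᶜ = (fun y : E => (1 + R / ‖y‖) • y) '' {0}ᶜ := by
    ext x
    simp only [mem_compl_iff, mem_closedBall, dist_zero_right, not_le, mem_image,
      mem_singleton_iff]
    constructor
    · intro hx
      have hx0 : 0 < ‖x‖ := hR.trans_lt hx
      have hpos : 0 < 1 - R / ‖x‖ := by
        rw [sub_pos, div_lt_one hx0]
        exact hx
      refine ⟨(1 - R / ‖x‖) • x, ?_, ?_⟩
      · exact smul_ne_zero hpos.ne' (norm_pos_iff.1 hx0)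
      · have hne : ‖x‖ - R ≠ 0 := (sub_pos.2 hx).ne'
        rw [norm_smul, Real.norm_of_nonneg hpos.le, smul_smul]
        convert one_smul ℝ x using 2
        field_simp
        ring
    · rintro ⟨y, hy, rfl⟩
      have hy0 : 0 < ‖y‖ := norm_pos_iff.2 hy
      rw [norm_smul, Real.norm_of_nonneg (by positivity), add_mul, div_mul_cancel₀ _ hy0.ne']
      linarith
  rw [himage]
  refine (isConnected_compl_singleton_of_one_lt_rank h 0).isPreconnected.image _ ?_
  refine ContinuousOn.smul (continuousOn_const.add (continuousOn_const.div
    continuous_norm.continuousOn ?_)) continuousOn_id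
  intro y hy
  exact norm_ne_zero_iff.2 hy

theorem SimplePolygon.isCompact_bdryCurve (P : SimplePolygon) : IsCompact P.bdryCurve :=
  isCompact_Icc.image P.continuous

theorem SimplePolygon.mem_compl_region {P : SimplePolygon} {x : Plane} :
    x ∈ P.regionᶜ ↔
      x ∈ P.bdryCurveᶜ ∧ ¬ Bornology.IsBounded (connectedComponentIn P.bdryCurveᶜ x) := by
  simp only [SimplePolygon.region, mem_compl_iff, mem_union, mem_ofPred_eq]
  tauto

theorem SimplePolygon.connectedComponentIn_subset_compl_region {P : SimplePolygon} {x : Plane}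
    (hx : x ∈ P.regionᶜ) : connectedComponentIn P.bdryCurveᶜ x ⊆ P.regionᶜ := by
  intro y hy
  rw [SimplePolygon.mem_compl_region] at hx ⊢
  exact ⟨connectedComponentIn_subset _ _ hy, connectedComponentIn_eq hy ▸ hx.2⟩

theorem SimplePolygon.isOpen_compl_region (P : SimplePolygon) : IsOpen P.regionᶜ := by
  refine isOpen_iff_mem_nhds.2 fun x hx => ?_
  refine Filter.mem_of_superset ?_ (SimplePolygon.connectedComponentIn_subset_compl_region hx)
  exact P.isCompact_bdryCurve.isClosed.isOpen_compl.connectedComponentIn.mem_nhds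
    (mem_connectedComponentIn (SimplePolygon.mem_compl_region.1 hx).1)

/-- The complement of a polygonal region is connected, being the only unbounded component of the
complement of the boundary curve. -/
theorem SimplePolygon.isPreconnected_compl_region (P : SimplePolygon) :
    IsPreconnected P.regionᶜ := by
  obtain ⟨R, hR⟩ := P.isCompact_bdryCurve.isBounded.subset_closedBall 0
  have hsub : (closedBall (0 : Plane) (max R 0))ᶜ ⊆ P.bdryCurveᶜ :=
    compl_subset_compl.2 (hR.trans (closedBall_subset_closedBall (le_max_left _ _)))
  have hconn : IsPreconnected (closedBall (0 : Plane) (max R 0))ᶜ :=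
    isPreconnected_compl_closedBall_zero
      (by rw [← Module.finrank_eq_rank]; simp) (le_max_right _ _)
  have hfar : ∀ x ∈ P.regionᶜ, ∃ y ∈ connectedComponentIn P.bdryCurveᶜ x,
      y ∈ (closedBall (0 : Plane) (max R 0))ᶜ := by
    intro x hx
    by_contra! hcon
    refine (SimplePolygon.mem_compl_region.1 hx).2
      ((isBounded_closedBall (x := (0 : Plane)) (r := max R 0)).subset fun y hy => ?_)
    exact notMem_compl_iff.1 (hcon y hy)
  refine isPreconnected_of_forall_pair fun x hx y hy => ?_
  obtain ⟨x', hx', hx'far⟩ := hfar x hx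
  obtain ⟨y', hy', hy'far⟩ := hfar y hy
  refine ⟨connectedComponentIn P.bdryCurveᶜ x,
    SimplePolygon.connectedComponentIn_subset_compl_region hx,
    mem_connectedComponentIn (SimplePolygon.mem_compl_region.1 hx).1, ?_,
    isPreconnected_connectedComponentIn⟩
  have hy'x' := hconn.subset_connectedComponentIn hx'far hsub hy'far
  rw [connectedComponentIn_eq hx', connectedComponentIn_eq hy'x', ← connectedComponentIn_eq hy']
  exact mem_connectedComponentIn (SimplePolygon.mem_compl_region.1 hy).1

theorem Complex.mem_segment_of_div_notMem_slitPlane {z p q : ℂ}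
    (h : (z - p) / (z - q) ∉ Complex.slitPlane) : z ∈ segment ℝ p q := by
  rcases eq_or_ne z q with rfl | hq
  · exact right_mem_segment ℝ _ _
  rw [Complex.mem_slitPlane_iff_not_le_zero, not_not, Complex.nonpos_iff] at h
  have hzq : z - q ≠ 0 := sub_ne_zero.2 hq
  set r : ℝ := -((z - p) / (z - q)).re with hr
  have hr0 : 0 ≤ r := by simpa [hr] using h.1
  have hdiv : (z - p) / (z - q) = -(r : ℂ) := by
    apply Complex.ext <;> simp [hr, h.2]
  rw [div_eq_iff hzq] at hdiv
  refine ⟨1 / (1 + r), r / (1 + r), by positivity, by positivity, by field_simp, ?_⟩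
  have h1 : (1 + r : ℂ) ≠ 0 := by exact_mod_cast (by positivity : 1 + r ≠ 0)
  simp only [Complex.real_smul]
  push_cast
  field_simp
  linear_combination -hdiv

/-- If `O` is open and connected, the function `(z - p) / (z - q)` with `p, q ∈ O` has a continuous
logarithm off `O`. -/
theorem Complex.exists_continuousOn_log_div {O : Set ℂ} (hO : IsOpen O) (hconn : IsPreconnected O)
    {p q : ℂ} (hp : p ∈ O) (hq : q ∈ O) :
    ∃ L : ℂ → ℂ, ContinuousOn L Oᶜ ∧ ∀ z ∈ Oᶜ, Complex.exp (L z) = (z - p) / (z - q) := by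
  have hne : ∀ {z w : ℂ}, z ∈ Oᶜ → w ∈ O → z - w ≠ 0 := by
    intro z w hz hw h
    exact hz (sub_eq_zero.1 h ▸ hw)
  refine hconn.induction₂ (fun p q => ∃ L : ℂ → ℂ, ContinuousOn L Oᶜ ∧
    ∀ z ∈ Oᶜ, Complex.exp (L z) = (z - p) / (z - q)) ?_ ?_ ?_ hp hq
  · intro p hp
    obtain ⟨ε, hε, hball⟩ := Metric.isOpen_iff.1 hO p hp
    filter_upwards [mem_nhdsWithin_of_mem_nhds (ball_mem_nhds p hε)] with q hq
    have hslit : ∀ z ∈ Oᶜ, (z - p) / (z - q) ∈ Complex.slitPlane := by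
      intro z hz
      by_contra h
      refine hz (hball ?_)
      exact (convex_ball p ε).segment_subset (mem_ball_self hε) hq
        (Complex.mem_segment_of_div_notMem_slitPlane h)
    refine ⟨fun z => Complex.log ((z - p) / (z - q)), ?_, fun z hz =>
      Complex.exp_log (div_ne_zero (hne hz hp) (hne hz (hball hq)))⟩
    refine ContinuousOn.clog ?_ hslit
    exact ContinuousOn.div (by fun_prop) (by fun_prop) fun z hz => hne hz (hball hq)
  · rintro p q r hp hq hr ⟨L, hL, hexpL⟩ ⟨M, hM, hexpM⟩
    refine ⟨fun z => L z + M z, hL.add hM, fun z hz => ?_⟩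
    rw [Complex.exp_add, hexpL z hz, hexpM z hz, div_mul_div_cancel₀ (hne hz hq)]
  · rintro p q hp hq ⟨L, hL, hexpL⟩
    refine ⟨fun z => -L z, hL.neg, fun z hz => ?_⟩
    rw [Complex.exp_neg, hexpL z hz, inv_div]

/-- Two continuous logarithms of the same function differ by a constant on a connected set. -/
theorem Complex.log_sub_log_eq_of_isPreconnected {S : Set ℂ} (hS : IsPreconnected S) {L M : ℂ → ℂ}
    (hL : ContinuousOn L S) (hM : ContinuousOn M S)
    (hexp : ∀ z ∈ S, Complex.exp (L z) = Complex.exp (M z)) {x y : ℂ} (hx : x ∈ S) (hy : y ∈ S) :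
    L x - M x = L y - M y := by
  have h2 : (2 * Real.pi * Complex.I : ℂ) ≠ 0 := Complex.two_pi_I_ne_zero
  have hmaps : ∀ z ∈ S, ∃ n : ℤ, (L z - M z) / (2 * Real.pi * Complex.I) = n := by
    intro z hz
    obtain ⟨n, hn⟩ := Complex.exp_eq_exp_iff_exists_int.1 (hexp z hz)
    exact ⟨n, by rw [hn, add_sub_cancel_left, mul_div_cancel_right₀ _ h2]⟩
  have hcont : ContinuousOn (fun z => ((L z - M z) / (2 * Real.pi * Complex.I)).re) S :=
    Complex.continuous_re.comp_continuousOn ((hL.sub hM).div_const _)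
  have hdisc : IsDiscrete (Set.range ((↑) : ℤ → ℝ)) :=
    Int.isClosedEmbedding_coe_real.isEmbedding.isDiscrete_range
  have key := hS.constant_of_mapsTo hdisc hcont
    (fun z hz => by
      obtain ⟨n, hn⟩ := hmaps z hz
      exact ⟨n, by simp [hn]⟩) hx hy
  obtain ⟨n, hn⟩ := hmaps x hx
  obtain ⟨m, hm⟩ := hmaps y hy
  have hnm : n = m := by simpa [hn, hm] using key
  rw [div_eq_iff h2] at hn hm
  rw [hn, hm, hnm]

/-- A continuous logarithm of `(z - p) / (z - q)` on a real interval crossed by the segment from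
`p` to `q` is shifted differently from the principal logarithm at the two end points. -/
theorem Complex.log_div_jump {p q : ℂ} (hp : 0 < p.im) (hq : q.im < 0) {s t : ℝ}
    (hs : s * (p.im - q.im) < p.im * q.re - q.im * p.re)
    (ht : p.im * q.re - q.im * p.re < t * (p.im - q.im))
    {L : ℂ → ℂ} (hL : ContinuousOn L (segment ℝ (s : ℂ) t))
    (hexp : ∀ z ∈ segment ℝ (s : ℂ) t, Complex.exp (L z) = (z - p) / (z - q)) :
    L s - Complex.log ((s - p) / (s - q)) ≠ L t - Complex.log ((t - p) / (t - q)) := by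
  have him : ∀ z ∈ segment ℝ (s : ℂ) t, z.im = 0 := by
    rintro z ⟨u, v, -, -, -, rfl⟩
    simp
  have hslitp : ∀ z : ℂ, z.im = 0 → z - p ∈ Complex.slitPlane := fun z hz =>
    Or.inr (by simp [hz, hp.ne'])
  have hslitq : ∀ z : ℂ, z.im = 0 → z - q ∈ Complex.slitPlane := fun z hz =>
    Or.inr (by simp [hz, hq.ne])
  have hexpM : ∀ z : ℂ, z.im = 0 →
      Complex.exp (Complex.log (z - p) - Complex.log (z - q)) = (z - p) / (z - q) := by
    intro z hz
    rw [Complex.exp_sub, Complex.exp_log (Complex.slitPlane_ne_zero (hslitp z hz)),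
      Complex.exp_log (Complex.slitPlane_ne_zero (hslitq z hz))]
  have hconst : L s - (Complex.log (s - p) - Complex.log (s - q)) =
      L t - (Complex.log (t - p) - Complex.log (t - q)) :=
    Complex.log_sub_log_eq_of_isPreconnected
      (M := fun z => Complex.log (z - p) - Complex.log (z - q))
      (convex_segment (s : ℂ) (t : ℂ)).isPreconnected hL
      (ContinuousOn.sub
        (ContinuousOn.clog (by fun_prop) fun z hz => hslitp z (him z hz))
        (ContinuousOn.clog (by fun_prop) fun z hz => hslitq z (him z hz)))
      (fun z hz => by rw [hexp z hz, hexpM z (him z hz)])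
      (left_mem_segment ℝ _ _) (right_mem_segment ℝ _ _)
  have hdivim : ∀ x : ℝ, (((x : ℂ) - p) / (x - q)).im =
      (p.im * q.re - q.im * p.re - x * (p.im - q.im)) / Complex.normSq (x - q) := by
    intro x
    rw [Complex.div_im]
    simp only [Complex.sub_re, Complex.sub_im, Complex.ofReal_re, Complex.ofReal_im]
    ring
  have hnormSq : ∀ x : ℝ, 0 < Complex.normSq (x - q) := fun x =>
    Complex.normSq_pos.2 (Complex.slitPlane_ne_zero (hslitq x (Complex.ofReal_im x)))
  have hargs : 0 ≤ (((s : ℂ) - p) / (s - q)).arg := by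
    rw [Complex.arg_nonneg_iff, hdivim]
    exact div_nonneg (by linarith) (hnormSq s).le
  have hargt : (((t : ℂ) - p) / (t - q)).arg < 0 := by
    rw [Complex.arg_neg_iff, hdivim]
    exact div_neg_of_neg_of_pos (by linarith) (hnormSq t)
  have hargsp : ((s : ℂ) - p).arg < 0 := Complex.arg_neg_iff.2 (by simpa using hp)
  have hargsq : 0 ≤ ((s : ℂ) - q).arg := Complex.arg_nonneg_iff.2 (by simpa using hq.le)
  have hargtp := Complex.neg_pi_lt_arg ((t : ℂ) - p)
  have hargtq := Complex.arg_le_pi ((t : ℂ) - q)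
  have hdiv0 : ((t : ℂ) - p) / (t - q) ≠ 0 :=
    div_ne_zero (Complex.slitPlane_ne_zero (hslitp t (Complex.ofReal_im t)))
      (Complex.slitPlane_ne_zero (hslitq t (Complex.ofReal_im t)))
  obtain ⟨n, hn⟩ := Complex.exp_eq_exp_iff_exists_int.1
    ((Complex.exp_log hdiv0).trans (hexpM t (Complex.ofReal_im t)).symm)
  intro heq
  have himt := congrArg Complex.im hn
  have himst := congrArg Complex.im (show
    Complex.log ((s - p) / (s - q)) - (Complex.log (s - p) - Complex.log (s - q)) =
      Complex.log ((t - p) / (t - q)) - (Complex.log (t - p) - Complex.log (t - q)) by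
    linear_combination hconst - heq)
  simp only [Complex.sub_im, Complex.log_im, Complex.add_im, Complex.mul_im, Complex.intCast_re,
    Complex.intCast_im, Complex.mul_re, Complex.I_re, Complex.I_im, Complex.ofReal_re,
    Complex.ofReal_im, Complex.re_ofNat, Complex.im_ofNat] at himt himst
  have hpos : (0 : ℝ) < n := by
    by_contra! h
    nlinarith [Real.pi_pos]
  have hlt : (n : ℝ) < 1 := by
    by_contra! h
    nlinarith [Real.pi_pos]
  have h0 : 0 < n := by exact_mod_cast hpos
  have h1 : n < 1 := by exact_mod_cast hlt
  omega

/-- A compact set is connected if it has connected fibres over a connected image. -/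
theorem IsCompact.isPreconnected_of_fibers {X Y : Type*} [TopologicalSpace X] [TopologicalSpace Y]
    [T2Space Y] {K : Set X} (hK : IsCompact K) {f : X → Y} (hf : Continuous f)
    (himage : IsPreconnected (f '' K)) (hfiber : ∀ y, IsPreconnected (K ∩ f ⁻¹' {y})) :
    IsPreconnected K := by
  rw [isPreconnected_closed_iff]
  rintro u v hu hv hcover ⟨a, haK, hau⟩ ⟨b, hbK, hbv⟩
  obtain ⟨y, -, ⟨a', ⟨ha'K, ha'u⟩, ha'⟩, ⟨b', ⟨hb'K, hb'v⟩, hb'⟩⟩ :=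
    isPreconnected_closed_iff.1 himage (f '' (K ∩ u)) (f '' (K ∩ v))
      ((hK.inter_right hu).image hf).isClosed ((hK.inter_right hv).image hf).isClosed
      (by
        rw [← image_union, ← inter_union_distrib_left, inter_eq_left.2 hcover])
      ⟨f a, mem_image_of_mem f haK, mem_image_of_mem f ⟨haK, hau⟩⟩
      ⟨f b, mem_image_of_mem f hbK, mem_image_of_mem f ⟨hbK, hbv⟩⟩
  obtain ⟨c, hc, hcuv⟩ := isPreconnected_closed_iff.1 (hfiber y) u v hu hv
    (inter_subset_left.trans hcover) ⟨a', ⟨ha'K, ha'⟩, ha'u⟩ ⟨b', ⟨hb'K, hb'⟩, hb'v⟩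
  exact ⟨c, hc.1, hcuv⟩

theorem Complex.one_le_dist_iff {z w : ℂ} :
    1 ≤ dist z w ↔ 1 ≤ (z.re - w.re) ^ 2 + (z.im - w.im) ^ 2 := by
  rw [Complex.dist_eq_re_im, Real.one_le_sqrt]

/-- The points from which a unit disc, moved downwards, would meet a point of `O` in the upper
half-plane. -/
def blockedFromAbove (O : Set ℂ) : Set ℂ :=
  {c | ∃ o ∈ O, 0 < o.im ∧ (c.re - o.re) ^ 2 + (max 0 (o.im - c.im)) ^ 2 < 1}

/-- The points from which a unit disc, moved upwards, would meet a point of `O` in the lower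
half-plane. -/
def blockedFromBelow (O : Set ℂ) : Set ℂ :=
  {c | ∃ o ∈ O, o.im < 0 ∧ (c.re - o.re) ^ 2 + (max 0 (c.im - o.im)) ^ 2 < 1}

theorem isOpen_blockedFromAbove (O : Set ℂ) : IsOpen (blockedFromAbove O) := by
  have : blockedFromAbove O = ⋃ o ∈ O, ⋃ _ : 0 < o.im,
      {c : ℂ | (c.re - o.re) ^ 2 + (max 0 (o.im - c.im)) ^ 2 < 1} := by
    ext c
    simp [blockedFromAbove, and_left_comm]
  rw [this]
  exact isOpen_biUnion fun o _ => isOpen_iUnion fun _ =>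
    isOpen_lt (by fun_prop) continuous_const

theorem isOpen_blockedFromBelow (O : Set ℂ) : IsOpen (blockedFromBelow O) := by
  have : blockedFromBelow O = ⋃ o ∈ O, ⋃ _ : o.im < 0,
      {c : ℂ | (c.re - o.re) ^ 2 + (max 0 (c.im - o.im)) ^ 2 < 1} := by
    ext c
    simp [blockedFromBelow, and_left_comm]
  rw [this]
  exact isOpen_biUnion fun o _ => isOpen_iUnion fun _ =>
    isOpen_lt (by fun_prop) continuous_const

theorem blockedFromAbove_mono {O : Set ℂ} {c c' : ℂ} (hc : c ∈ blockedFromAbove O)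
    (hre : c'.re = c.re) (him : c.im ≤ c'.im) : c' ∈ blockedFromAbove O := by
  obtain ⟨o, ho, hopos, hlt⟩ := hc
  refine ⟨o, ho, hopos, lt_of_le_of_lt ?_ hlt⟩
  rw [hre]
  gcongr

theorem blockedFromBelow_mono {O : Set ℂ} {c c' : ℂ} (hc : c ∈ blockedFromBelow O)
    (hre : c'.re = c.re) (him : c'.im ≤ c.im) : c' ∈ blockedFromBelow O := by
  obtain ⟨o, ho, honeg, hlt⟩ := hc
  refine ⟨o, ho, honeg, lt_of_le_of_lt ?_ hlt⟩
  rw [hre]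
  gcongr

/-- If a unit disc centred over `[-d, d]` is blocked from both sides, then two of the obstacles are
at distance less than `2`, and the segment between them crosses the open interval `(-d, d)`. -/
theorem exists_gate_of_blocked {O : Set ℂ} {d : ℝ} (hneg : ∀ o ∈ O, 1 ≤ dist o (-d : ℂ))
    (hpos : ∀ o ∈ O, 1 ≤ dist o (d : ℂ)) {c : ℂ} (hcl : -d ≤ c.re) (hcr : c.re ≤ d)
    (habove : c ∈ blockedFromAbove O) (hbelow : c ∈ blockedFromBelow O) :
    ∃ p ∈ O, ∃ q ∈ O, dist p q < 2 ∧ 0 < p.im ∧ q.im < 0 ∧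
      -d * (p.im - q.im) < p.im * q.re - q.im * p.re ∧
      p.im * q.re - q.im * p.re < d * (p.im - q.im) := by
  obtain ⟨p, hp, hpim, hpc⟩ := habove
  obtain ⟨q, hq, hqim, hqc⟩ := hbelow
  obtain ⟨y, hpy, hqy⟩ : ∃ y, (c.re - p.re) ^ 2 + (p.im - y) ^ 2 < 1 ∧
      (c.re - q.re) ^ 2 + (y - q.im) ^ 2 < 1 := by
    rcases le_total c.im q.im with h1 | h1
    · refine ⟨q.im, ?_, ?_⟩
      · rw [max_eq_right (by linarith)] at hpc
        nlinarith
      · nlinarith [sq_nonneg (max 0 (c.im - q.im))]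
    rcases le_total p.im c.im with h2 | h2
    · refine ⟨p.im, ?_, ?_⟩
      · nlinarith [sq_nonneg (max 0 (p.im - c.im))]
      · rw [max_eq_right (by linarith)] at hqc
        nlinarith
    · rw [max_eq_right (by linarith)] at hpc hqc
      exact ⟨c.im, hpc, hqc⟩
  have hpneg := Complex.one_le_dist_iff.1 (hneg p hp)
  have hqneg := Complex.one_le_dist_iff.1 (hneg q hq)
  have hppos := Complex.one_le_dist_iff.1 (hpos p hp)
  have hqpos := Complex.one_le_dist_iff.1 (hpos q hq)
  simp only [Complex.neg_re, Complex.neg_im, Complex.ofReal_re, Complex.ofReal_im] at *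
  refine ⟨p, hp, q, hq, ?_, hpim, hqim, ?_, ?_⟩
  · rw [Complex.dist_eq_re_im, Real.sqrt_lt' (by norm_num)]
    nlinarith [sq_nonneg ((c.re - p.re) + (c.re - q.re)), sq_nonneg ((p.im - y) - (y - q.im))]
  · have h := add_pos (mul_pos hpim (sub_pos.2 (hqy.trans_le hqneg)))
      (mul_pos (neg_pos.2 hqim) (sub_pos.2 (hpy.trans_le hpneg)))
    have hsq : 0 ≤ (p.im - q.im) * ((c.re + d) ^ 2 + y ^ 2) :=
      mul_nonneg (by linarith) (by positivity)
    have hprod : 0 < (c.re + d) * (p.im * q.re - q.im * p.re + d * (p.im - q.im)) := by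
      nlinarith
    linarith [pos_of_mul_pos_right hprod (by linarith)]
  · have h := add_pos (mul_pos hpim (sub_pos.2 (hqy.trans_le hqpos)))
      (mul_pos (neg_pos.2 hqim) (sub_pos.2 (hpy.trans_le hppos)))
    have hsq : 0 ≤ (p.im - q.im) * ((d - c.re) ^ 2 + y ^ 2) :=
      mul_nonneg (by linarith) (by positivity)
    have hprod : 0 < (d - c.re) * (d * (p.im - q.im) - (p.im * q.re - q.im * p.re)) := by
      nlinarith
    linarith [pos_of_mul_pos_right hprod (by linarith)]

theorem isPreconnected_inter_re_preimage_of_ordConnected {K : Set ℂ} (x : ℝ)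
    (h : {y : ℝ | (⟨x, y⟩ : ℂ) ∈ K}.OrdConnected) :
    IsPreconnected (K ∩ Complex.re ⁻¹' {x}) := by
  have himage : K ∩ Complex.re ⁻¹' {x} = (fun y : ℝ => (⟨x, y⟩ : ℂ)) '' {y | ⟨x, y⟩ ∈ K} := by
    ext c
    constructor
    · rintro ⟨hc, rfl⟩
      exact ⟨c.im, hc, rfl⟩
    · rintro ⟨y, hy, rfl⟩
      exact ⟨hy, rfl⟩
  rw [himage]
  refine h.isPreconnected.image _ (Continuous.continuousOn ?_)
  simp only [Complex.mk_eq_add_mul_I]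
  fun_prop

/-- Either a unit disc can be moved from `-d` to `d` in the complement of `O`, or two points of `O`
form a gate of length less than `2` crossing the interval between these positions. -/
theorem exists_connected_or_gate {O : Set ℂ} {d : ℝ} (hd0 : 0 < d) (hd1 : d < 1)
    (hneg : ∀ o ∈ O, 1 ≤ dist o (-d : ℂ)) (hpos : ∀ o ∈ O, 1 ≤ dist o (d : ℂ)) :
    (∃ G : Set ℂ, IsPreconnected G ∧ (-d : ℂ) ∈ G ∧ (d : ℂ) ∈ G ∧
      ∀ c ∈ G, ∀ o ∈ O, 1 ≤ dist c o) ∨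
    ∃ p ∈ O, ∃ q ∈ O, dist p q < 2 ∧ 0 < p.im ∧ q.im < 0 ∧
      -d * (p.im - q.im) < p.im * q.re - q.im * p.re ∧
      p.im * q.re - q.im * p.re < d * (p.im - q.im) := by
  by_cases hblocked : ∃ c : ℂ, -d ≤ c.re ∧ c.re ≤ d ∧ c ∈ blockedFromAbove O ∧
      c ∈ blockedFromBelow O
  · obtain ⟨c, hcl, hcr, habove, hbelow⟩ := hblocked
    exact Or.inr (exists_gate_of_blocked hneg hpos hcl hcr habove hbelow)
  left
  set G : Set ℂ := (Icc (-d) d ×ℂ Icc (-1) 1) ∩ ((blockedFromAbove O)ᶜ ∩ (blockedFromBelow O)ᶜ)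
    with hG
  have hcompact : IsCompact G :=
    (isCompact_Icc.reProdIm isCompact_Icc).inter_right
      ((isOpen_blockedFromAbove O).isClosed_compl.inter
        (isOpen_blockedFromBelow O).isClosed_compl)
  have hendpoint : ∀ x : ℝ, -d ≤ x → x ≤ d → (∀ o ∈ O, 1 ≤ dist o (x : ℂ)) → (x : ℂ) ∈ G := by
    intro x hxl hxr hx
    refine ⟨⟨⟨by simpa using hxl, by simpa using hxr⟩, by simp⟩, ?_, ?_⟩
    · rintro ⟨o, ho, hoim, hlt⟩
      have := Complex.one_le_dist_iff.1 (hx o ho)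
      simp only [Complex.ofReal_re, Complex.ofReal_im, sub_zero, max_eq_right hoim.le] at this hlt
      linarith [sq_nonneg (x - o.re), sub_sq_comm x o.re]
    · rintro ⟨o, ho, hoim, hlt⟩
      have := Complex.one_le_dist_iff.1 (hx o ho)
      simp only [Complex.ofReal_re, Complex.ofReal_im, sub_zero, zero_sub,
        max_eq_right (neg_nonneg.2 hoim.le), neg_sq] at this hlt
      linarith [sub_sq_comm x o.re]
  have himage : Complex.re '' G = Icc (-d) d := by
    refine Subset.antisymm ?_ fun x hx => ?_
    · rintro _ ⟨c, hc, rfl⟩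
      exact hc.1.1
    · have hcont : Continuous fun y : ℝ => (⟨x, y⟩ : ℂ) := by
        simp only [Complex.mk_eq_add_mul_I]
        fun_prop
      by_contra hempty
      have hcover : Icc (-1 : ℝ) 1 ⊆ (fun y : ℝ => (⟨x, y⟩ : ℂ)) ⁻¹' blockedFromAbove O ∪
          (fun y : ℝ => (⟨x, y⟩ : ℂ)) ⁻¹' blockedFromBelow O := by
        intro y hy
        by_contra hfree
        rw [mem_union, not_or] at hfree
        exact hempty ⟨⟨x, y⟩, ⟨⟨hx, hy⟩, hfree⟩, rfl⟩
      have hbot : (⟨x, -1⟩ : ℂ) ∉ blockedFromAbove O := by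
        rintro ⟨o, ho, hoim, hlt⟩
        rw [max_eq_right (by simp only; linarith)] at hlt
        simp only at hlt
        nlinarith [sq_nonneg (x - o.re)]
      have htop : (⟨x, 1⟩ : ℂ) ∉ blockedFromBelow O := by
        rintro ⟨o, ho, hoim, hlt⟩
        rw [max_eq_right (by simp only; linarith)] at hlt
        simp only at hlt
        nlinarith [sq_nonneg (x - o.re)]
      obtain ⟨y, -, hyabove, hybelow⟩ := isPreconnected_Icc _ _
        ((isOpen_blockedFromAbove O).preimage hcont) ((isOpen_blockedFromBelow O).preimage hcont)
        hcover
        ⟨1, right_mem_Icc.2 (by norm_num),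
          (hcover (right_mem_Icc.2 (by norm_num))).resolve_right htop⟩
        ⟨-1, left_mem_Icc.2 (by norm_num),
          (hcover (left_mem_Icc.2 (by norm_num))).resolve_left hbot⟩
      exact hblocked ⟨⟨x, y⟩, hx.1, hx.2, hyabove, hybelow⟩
  have hconn : IsPreconnected G := by
    refine hcompact.isPreconnected_of_fibers Complex.continuous_re
      (himage ▸ isPreconnected_Icc) fun x =>
        isPreconnected_inter_re_preimage_of_ordConnected x ⟨fun y₁ hy₁ y₂ hy₂ y hy => ?_⟩
    exact ⟨⟨hy₁.1.1, hy₁.1.2.1.trans hy.1, hy.2.trans hy₂.1.2.2⟩,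
      fun h => hy₂.2.1 (blockedFromAbove_mono h rfl hy.2),
      fun h => hy₁.2.2 (blockedFromBelow_mono h rfl hy.1)⟩
  refine ⟨G, hconn, ?_, hendpoint d (by linarith) le_rfl hpos, ?_⟩
  · simpa using hendpoint (-d) le_rfl (by linarith) (by simpa using hneg)
  rintro c ⟨⟨⟨hcl, hcr⟩, -⟩, habove, hbelow⟩ o ho
  rw [Complex.one_le_dist_iff]
  by_contra! hlt
  rcases lt_trichotomy o.im 0 with hoim | hoim | hoim
  · refine hbelow ⟨o, ho, hoim, lt_of_le_of_lt ?_ hlt⟩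
    rcases max_cases 0 (c.im - o.im) with h | h <;> rw [h.1]
    nlinarith [sq_nonneg (c.im - o.im)]
  · have h1 := Complex.one_le_dist_iff.1 (hneg o ho)
    have h2 := Complex.one_le_dist_iff.1 (hpos o ho)
    simp only [Complex.neg_re, Complex.neg_im, Complex.ofReal_re, Complex.ofReal_im, hoim] at h1 h2
    have hlt' : |c.re - o.re| < 1 := by
      rw [← sq_lt_one_iff_abs_lt_one]
      nlinarith [sq_nonneg (c.im - o.im)]
    have h1' : 1 ≤ |o.re - -d| := by
      rw [← one_le_sq_iff_one_le_abs]
      linarith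
    have h2' : 1 ≤ |o.re - d| := by
      rw [← one_le_sq_iff_one_le_abs]
      linarith
    rw [abs_lt] at hlt'
    rcases le_abs.1 h1' with h | h <;> rcases le_abs.1 h2' with h' | h' <;> linarith
  · refine habove ⟨o, ho, hoim, lt_of_le_of_lt ?_ hlt⟩
    rcases max_cases 0 (o.im - c.im) with h | h <;> rw [h.1] <;>
      nlinarith [sq_nonneg (c.im - o.im)]

/-- If a segment shorter than `2` crosses a gate `p q` of length less than `2` and the end point `b`
has distance at least `1` from `p` and `q`, then the other end point is within distance `2` of the
midpoint of the gate. -/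
theorem dist_midpoint_lt_two {p q a b z : ℂ} (hpq : dist p q < 2) (hbp : 1 ≤ dist b p)
    (hbq : 1 ≤ dist b q) (hzpq : z ∈ segment ℝ p q) (hzab : z ∈ segment ℝ a b)
    (hab : dist a b < 2) : dist a (midpoint ℝ p q) < 2 := by
  have hzm : dist z (midpoint ℝ p q) ≤ dist z b := by
    obtain ⟨u, v, hu, hv, huv, rfl⟩ := hzpq
    obtain rfl : v = 1 - u := by linarith
    rw [Complex.one_le_dist_iff] at hbp hbq
    rw [Complex.dist_eq_re_im, Real.sqrt_lt' (by norm_num)] at hpq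
    rw [Complex.dist_eq_re_im, Complex.dist_eq_re_im]
    refine Real.sqrt_le_sqrt ?_
    rw [midpoint_eq_smul_add]
    simp only [Complex.add_re, Complex.add_im, Complex.real_smul, Complex.mul_re, Complex.mul_im,
      Complex.ofReal_re, Complex.ofReal_im, invOf_eq_inv]
    norm_num
    nlinarith [mul_le_mul_of_nonneg_left hbp hu, mul_le_mul_of_nonneg_left hbq hv]
  calc dist a (midpoint ℝ p q) ≤ dist a z + dist z (midpoint ℝ p q) := dist_triangle _ _ _
    _ ≤ dist a z + dist z b := by gcongr
    _ = dist a b := dist_add_dist_of_mem_segment hzab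
    _ < 2 := hab

theorem segment_subset_compl_of_one_le_dist {O : Set ℂ} {a b : ℂ} (hab : dist a b < 2)
    (ha : ∀ o ∈ O, 1 ≤ dist a o) (hb : ∀ o ∈ O, 1 ≤ dist b o) : segment ℝ a b ⊆ Oᶜ := by
  intro z hz hzO
  linarith [dist_add_dist_of_mem_segment hz, ha z hzO, hb z hzO, dist_comm z b]

/-- All pairs of positions at distance less than `2` in two connected sets of positions of a unit
disc have a common point within distance `2`, unless the two sets can be joined. -/
theorem exists_common_point_of_normalized {O C C' : Set ℂ} (hO : IsOpen O)
    (hOconn : IsPreconnected O) (hCconn : IsPreconnected C) (hC'conn : IsPreconnected C')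
    (hC : ∀ c ∈ C, ∀ o ∈ O, 1 ≤ dist c o) (hC' : ∀ c ∈ C', ∀ o ∈ O, 1 ≤ dist c o)
    {d : ℝ} (hd0 : 0 < d) (hd1 : d < 1) (hneg : (-d : ℂ) ∈ C) (hpos : (d : ℂ) ∈ C')
    (hsep : ∀ G : Set ℂ, IsPreconnected G → (-d : ℂ) ∈ G → (d : ℂ) ∈ G →
      ¬ ∀ c ∈ G, ∀ o ∈ O, 1 ≤ dist c o)
    {e e' : ℂ} (he : e ∈ C) (he' : e' ∈ C') (hee' : dist e e' < 2) :
    ∃ m : ℂ, dist (-d : ℂ) m < 2 ∧ dist (d : ℂ) m < 2 ∧ dist e m < 2 ∧ dist e' m < 2 := by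
  rcases exists_connected_or_gate hd0 hd1 (fun o ho => dist_comm o (-d : ℂ) ▸ hC _ hneg o ho)
      (fun o ho => dist_comm o (d : ℂ) ▸ hC' _ hpos o ho) with
    ⟨G, hG, hnegG, hposG, hfree⟩ | ⟨p, hp, q, hq, hpq, hpim, hqim, hl, hr⟩
  · exact absurd hfree (hsep G hG hnegG hposG)
  have hdd : dist (-d : ℂ) d < 2 := by
    rw [dist_comm, Complex.dist_eq, sub_neg_eq_add, ← Complex.ofReal_add, Complex.norm_real,
      Real.norm_of_nonneg (by linarith)]
    linarith
  have hT : 0 < p.im - q.im := by linarith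
  have hcross : ∃ z ∈ segment ℝ p q, z ∈ segment ℝ (-d : ℂ) d := by
    set x : ℝ := (p.im * q.re - q.im * p.re) / (p.im - q.im) with hx
    have hxl : -d < x := by rwa [hx, lt_div_iff₀ hT]
    have hxr : x < d := by rwa [hx, div_lt_iff₀ hT]
    refine ⟨x, ⟨-q.im / (p.im - q.im), p.im / (p.im - q.im),
      div_nonneg (by linarith) hT.le, div_nonneg hpim.le hT.le, by field_simp; ring, ?_⟩,
      ⟨(d - x) / (2 * d), (x + d) / (2 * d), div_nonneg (by linarith) (by linarith),
        div_nonneg (by linarith) (by linarith), by field_simp; ring, ?_⟩⟩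
    · apply Complex.ext
      · simp only [Complex.add_re, Complex.smul_re, smul_eq_mul, Complex.ofReal_re, hx]
        field_simp
        ring
      · simp only [Complex.add_im, Complex.smul_im, smul_eq_mul, Complex.ofReal_im]
        field_simp
        ring
    · apply Complex.ext
      · simp only [Complex.add_re, Complex.smul_re, smul_eq_mul, Complex.ofReal_re,
          Complex.neg_re]
        field_simp
        ring
      · simp only [Complex.add_im, Complex.smul_im, smul_eq_mul, Complex.ofReal_im,
          Complex.neg_im]
        ring
  obtain ⟨L, hL, hexpL⟩ := Complex.exists_continuousOn_log_div hO hOconn hp hq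
  have hconst : ∀ S : Set ℂ, IsPreconnected S → S ⊆ Oᶜ → Disjoint S (segment ℝ p q) →
      ∀ x ∈ S, ∀ y ∈ S, L x - Complex.log ((x - p) / (x - q)) =
        L y - Complex.log ((y - p) / (y - q)) := by
    intro S hS hSO hdisj x hx y hy
    have hne : ∀ z ∈ S, ∀ w ∈ O, z - w ≠ 0 := fun z hz w hw h =>
      hSO hz (sub_eq_zero.1 h ▸ hw)
    refine Complex.log_sub_log_eq_of_isPreconnected
      (M := fun z => Complex.log ((z - p) / (z - q))) hS (hL.mono hSO) ?_ ?_ hx hy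
    · refine ContinuousOn.clog (ContinuousOn.div (by fun_prop) (by fun_prop)
        fun z hz => hne z hz q hq) fun z hz => ?_
      by_contra h
      exact disjoint_left.1 hdisj hz (Complex.mem_segment_of_div_notMem_slitPlane h)
    · intro z hz
      rw [hexpL z (hSO hz), Complex.exp_log (div_ne_zero (hne z hz p hp) (hne z hz q hq))]
  have hsubO : ∀ S : Set ℂ, (∀ c ∈ S, ∀ o ∈ O, 1 ≤ dist c o) → S ⊆ Oᶜ := by
    intro S hS c hc hcO
    have := hS c hc c hcO
    norm_num at this
  have hdisj : ∀ S : Set ℂ, (∀ c ∈ S, ∀ o ∈ O, 1 ≤ dist c o) → Disjoint S (segment ℝ p q) := by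
    intro S hS
    refine disjoint_left.2 fun z hz hzpq => ?_
    linarith [dist_add_dist_of_mem_segment hzpq, hS z hz p hp, hS z hz q hq, dist_comm p z]
  have hcross' : ∃ z ∈ segment ℝ p q, z ∈ segment ℝ e e' := by
    by_contra! hmiss
    have hsub := segment_subset_compl_of_one_le_dist hdd (hC _ hneg) (hC' _ hpos)
    refine Complex.log_div_jump hpim hqim (s := -d) (t := d) hl hr
      (hL.mono (by simpa using hsub)) (fun z hz => hexpL z (hsub (by simpa using hz))) ?_
    have h1 := hconst C hCconn (hsubO C hC) (hdisj C hC) _ hneg e he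
    have h2 := hconst C' hC'conn (hsubO C' hC') (hdisj C' hC') e' he' _ hpos
    have h3 := hconst (segment ℝ e e') (convex_segment e e').isPreconnected
      (segment_subset_compl_of_one_le_dist hee' (hC _ he) (hC' _ he'))
      (disjoint_left.2 fun z hz hzpq => hmiss z hzpq hz) e (left_mem_segment ℝ _ _)
      e' (right_mem_segment ℝ _ _)
    simpa using h1.trans (h3.trans h2)
  obtain ⟨z, hzpq, hz⟩ := hcross
  obtain ⟨w, hwpq, hw⟩ := hcross'
  refine ⟨midpoint ℝ p q, ?_, ?_, ?_, ?_⟩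
  · exact dist_midpoint_lt_two hpq (hC' _ hpos p hp) (hC' _ hpos q hq) hzpq hz hdd
  · exact dist_midpoint_lt_two hpq (hC _ hneg p hp) (hC _ hneg q hq) hzpq
      (segment_symm ℝ (-d : ℂ) d ▸ hz) (dist_comm (-d : ℂ) d ▸ hdd)
  · exact dist_midpoint_lt_two hpq (hC' _ he' p hp) (hC' _ he' q hq) hwpq hw hee'
  · exact dist_midpoint_lt_two hpq (hC _ he p hp) (hC _ he q hq) hwpq
      (segment_symm ℝ e e' ▸ hw) (dist_comm e e' ▸ hee')

/-- Any two distinct points of the plane can be moved to opposite real numbers by an isometry. -/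
theorem exists_isometryEquiv_normalizing {a b : Plane} (hab : a ≠ b) :
    ∃ T : Plane ≃ᵢ ℂ, T a = -((dist a b / 2 : ℝ) : ℂ) ∧ T b = ((dist a b / 2 : ℝ) : ℂ) := by
  let φ : Plane ≃ₗᵢ[ℝ] ℂ := Complex.orthonormalBasisOneI.repr.symm
  have hw : φ b - φ a ≠ 0 := sub_ne_zero.2 fun h => hab (φ.injective h).symm
  have hdist : dist a b = ‖φ b - φ a‖ := by
    rw [← φ.dist_map, dist_comm, dist_eq_norm]
  let u : Circle := ⟨‖φ b - φ a‖ / (φ b - φ a), by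
    rw [← SetLike.mem_coe, Submonoid.coe_unitSphere, mem_sphere_zero_iff_norm, norm_div,
      Complex.norm_real, norm_norm, div_self (norm_ne_zero_iff.2 hw)]⟩
  have hu : (u : ℂ) * (φ b - φ a) = ‖φ b - φ a‖ := div_mul_cancel₀ _ hw
  refine ⟨(φ.toIsometryEquiv.trans (IsometryEquiv.addRight (-((φ a + φ b) / 2)))).trans
    (rotation u).toIsometryEquiv, ?_, ?_⟩
  · change rotation u (φ a + -((φ a + φ b) / 2)) = _
    rw [rotation_apply, hdist, Complex.ofReal_div, ← hu]
    push_cast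
    ring
  · change rotation u (φ b + -((φ a + φ b) / 2)) = _
    rw [rotation_apply, hdist, Complex.ofReal_div, ← hu]
    push_cast
    ring

theorem SimplePolygon.one_le_dist_of_mem_freeSpace {P : SimplePolygon} {c o : Plane}
    (hc : c ∈ P.freeSpace) (ho : o ∈ P.regionᶜ) : 1 ≤ dist c o := by
  by_contra! h
  exact ho (hc (by rwa [mem_ball, dist_comm]))

theorem SimplePolygon.mem_freeSpace_of_one_le_dist {P : SimplePolygon} {c : Plane}
    (h : ∀ o ∈ P.regionᶜ, 1 ≤ dist c o) : c ∈ P.freeSpace := by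
  intro z hz
  by_contra hzO
  rw [mem_ball, dist_comm] at hz
  exact (h z hzO).not_gt hz

/-- Positions in two distinct free-space components that interfere pairwise have a common point
in their auras. -/
theorem SimplePolygon.exists_common_point_of_interference {P : SimplePolygon} {C C' : Set Plane}
    (hC : IsFreeComponent P.freeSpace C) (hC' : IsFreeComponent P.freeSpace C') (hne : C ≠ C')
    {a b e e' : Plane} (ha : a ∈ C) (hb : b ∈ C') (hab : dist a b < 2) (he : e ∈ C) (he' : e' ∈ C')
    (hee' : dist e e' < 2) :
    ∃ m, dist a m < 2 ∧ dist b m < 2 ∧ dist e m < 2 ∧ dist e' m < 2 := by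
  obtain ⟨x, hx, rfl⟩ := hC
  obtain ⟨x', hx', rfl⟩ := hC'
  have hsep : ∀ G : Set Plane, IsPreconnected G → G ⊆ P.freeSpace → a ∈ G → b ∉ G := by
    intro G hG hGF haG hbG
    refine hne ?_
    rw [connectedComponentIn_eq ha, connectedComponentIn_eq hb]
    exact connectedComponentIn_eq (hG.subset_connectedComponentIn haG hGF hbG)
  have hab' : a ≠ b := by
    rintro rfl
    exact hsep {a} isPreconnected_singleton
      (singleton_subset_iff.2 (connectedComponentIn_subset _ _ ha)) rfl rfl
  obtain ⟨T, hTa, hTb⟩ := exists_isometryEquiv_normalizing hab'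
  have hfree : ∀ {y : Plane}, ∀ c ∈ T '' connectedComponentIn P.freeSpace y,
      ∀ o ∈ T '' P.regionᶜ, 1 ≤ dist c o := by
    rintro y _ ⟨c, hc, rfl⟩ _ ⟨o, ho, rfl⟩
    rw [T.dist_eq]
    exact P.one_le_dist_of_mem_freeSpace (connectedComponentIn_subset _ _ hc) ho
  obtain ⟨m, hm⟩ := exists_common_point_of_normalized
    (T.toHomeomorph.isOpenMap _ P.isOpen_compl_region)
    (P.isPreconnected_compl_region.image T T.continuous.continuousOn)
    (isPreconnected_connectedComponentIn.image T T.continuous.continuousOn)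
    (isPreconnected_connectedComponentIn.image T T.continuous.continuousOn)
    hfree hfree (half_pos (dist_pos.2 hab')) (by linarith)
    (hTa ▸ mem_image_of_mem T ha) (hTb ▸ mem_image_of_mem T hb)
    (fun G hG haG hbG hGfree => hsep (T.symm '' G)
      (hG.image T.symm T.symm.continuous.continuousOn)
      (by
        rintro _ ⟨c, hc, rfl⟩
        refine P.mem_freeSpace_of_one_le_dist fun o ho => ?_
        rw [← T.dist_eq, T.apply_symm_apply]
        exact hGfree c hc _ (mem_image_of_mem T ho))
      ⟨T a, hTa ▸ haG, T.symm_apply_apply a⟩ ⟨T b, hTb ▸ hbG, T.symm_apply_apply b⟩)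
    (mem_image_of_mem T he) (mem_image_of_mem T he') (by rwa [T.dist_eq])
  rw [← hTa, ← hTb, ← T.apply_symm_apply m] at hm
  simp only [T.dist_eq] at hm
  exact ⟨T.symm m, hm⟩

/-- If the points of `S ⊆ F` are pairwise at distance at least 4, then the mutual
interference set of two distinct free-space components contains at most one point of `S`. -/
theorem interference_subsingleton (P : SimplePolygon) (C C' : Set Plane)
    (hC : IsFreeComponent P.freeSpace C) (hC' : IsFreeComponent P.freeSpace C')
    (hne : C ≠ C') (S : Set Plane) (hS : S ⊆ P.freeSpace)
    (hsep : ∀ s₁ ∈ S, ∀ s₂ ∈ S, s₁ ≠ s₂ → 4 ≤ dist s₁ s₂) :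
    (S ∩ mutualInterference C C').Subsingleton := by
  rintro s₁ ⟨hs₁, hI₁⟩ s₂ ⟨hs₂, hI₂⟩
  by_contra hne₁₂
  have hpair : ∀ x ∈ mutualInterference C C',
      ∃ a ∈ C, ∃ b ∈ C', dist a b < 2 ∧ (x = a ∨ x = b) := by
    rintro x (⟨hx, y, hy, hyC⟩ | ⟨hx, y, hy, hyC⟩)
    · exact ⟨x, hx, y, hyC, by rwa [dist_comm], Or.inl rfl⟩
    · exact ⟨y, hyC, x, hx, hy, Or.inr rfl⟩
  obtain ⟨a, ha, b, hb, hab, hs₁ab⟩ := hpair s₁ hI₁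
  obtain ⟨e, he, e', he', hee', hs₂ee'⟩ := hpair s₂ hI₂
  obtain ⟨m, ham, hbm, hem, he'm⟩ :=
    SimplePolygon.exists_common_point_of_interference hC hC' hne ha hb hab he he' hee'
  have h₁ : dist s₁ m < 2 := by rcases hs₁ab with rfl | rfl <;> assumption
  have h₂ : dist s₂ m < 2 := by rcases hs₂ee' with rfl | rfl <;> assumption
  linarith [hsep s₁ hs₁ s₂ hs₂ hne₁₂, dist_triangle_right s₁ s₂ m]
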